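/- arXiv:2105.07254 — 7 statements merged into one kernel-verified Lean document; each statement's English description precedes it below -/
import Mathlib

section
/- Let 𝔤 be a finite-dimensional Lie algebra over a field of characteristic zero and 𝔤₀ ⊆ 𝔤 a Lie subalgebra such that the pair (𝔤,𝔤₀) is effective. Then the Weisfeiler filtration reaches zero, i.e., there exists an integer r ≥ 0 such that 𝔤_r = 0. -/
/-- One step of the Weisfeiler filtration: `{x ∈ S | ∀ y, ⁅x, y⁆ ∈ S}`. -/
def weisfeilerStep {K L : Type*} [Field K] [LieRing L] [LieAlgebra K L]
    (S : Submodule K L) : Submodule K L where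
  carrier := {x | x ∈ S ∧ ∀ y : L, ⁅x, y⁆ ∈ S}
  add_mem' := fun ha hb => ⟨S.add_mem ha.1 hb.1, fun y => by
    rw [add_lie]; exact S.add_mem (ha.2 y) (hb.2 y)⟩
  zero_mem' := ⟨S.zero_mem, fun y => by rw [zero_lie]; exact S.zero_mem⟩
  smul_mem' := fun c x hx => ⟨S.smul_mem c hx.1, fun y => by
    rw [smul_lie]; exact S.smul_mem c (hx.2 y)⟩

/-- The Weisfeiler filtration of the pair `(L, g₀)`:
`W 0 = g₀` and `W (k+1) = {x ∈ W k | ∀ y : L, ⁅x, y⁆ ∈ W k}`. -/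
def weisfeiler {K L : Type*} [Field K] [LieRing L] [LieAlgebra K L]
    (g₀ : LieSubalgebra K L) : ℕ → Submodule K L
  | 0 => g₀.toSubmodule
  | (k + 1) => weisfeilerStep (weisfeiler g₀ k)

/-- The pair `(L, g₀)` is effective: the only ideal of `L` contained in `g₀` is zero. -/
def IsEffectivePair {K L : Type*} [Field K] [LieRing L] [LieAlgebra K L]
    (g₀ : LieSubalgebra K L) : Prop :=
  ∀ I : LieIdeal K L, (I : Submodule K L) ≤ g₀.toSubmodule → I = ⊥

/-- If the pair `(𝔤, 𝔤₀)` is effective, the Weisfeiler filtration reaches zero. -/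
theorem weisfeiler_eventually_bot
    {K : Type*} [Field K] [CharZero K]
    {L : Type*} [LieRing L] [LieAlgebra K L] [Module.Finite K L]
    (g₀ : LieSubalgebra K L) (heff : IsEffectivePair g₀) :
    ∃ r : ℕ, weisfeiler g₀ r = ⊥ := by
  have hanti : Antitone (weisfeiler g₀) :=
    antitone_nat_of_succ_le (fun n x hx => hx.1)
  obtain ⟨n, hn⟩ := WellFoundedLT.antitone_chain_condition hanti
  refine ⟨n, ?_⟩
  have hstep : weisfeiler g₀ n = weisfeiler g₀ (n + 1) := hn (n + 1) (Nat.le_succ n)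
  let I : LieIdeal K L :=
    { weisfeiler g₀ n with
      lie_mem := by
        intro y x hx
        have hx' : x ∈ weisfeiler g₀ n := hx
        rw [hstep] at hx'
        have h := (weisfeiler g₀ n).neg_mem (hx'.2 y)
        rw [lie_skew] at h
        exact h }
  have hI : I = ⊥ := heff I (hanti (Nat.zero_le n))
  have h2 : (I : Submodule K L) = ⊥ := by rw [hI]; rfl
  exact h2
end

section
/- Let 𝔤 be a finite-dimensional Lie algebra over a field of characteristic zero and 𝔤₀ ⊆ 𝔤 a Lie subalgebra, with Weisfeiler filtration (𝔤_k). Then for all integers i, j ≥ 0 one has [𝔤_i, 𝔤_j] ⊆ 𝔤_{i+j}. In particular, each 𝔤_i is an ideal of the Lie algebra 𝔤₀. -/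
theorem weisfeiler_bracket_aux {K L : Type*} [Field K] [LieRing L] [LieAlgebra K L]
    (g₀ : LieSubalgebra K L) (n : ℕ) : ∀ i j : ℕ, i + j = n →
    ∀ x ∈ weisfeiler g₀ i, ∀ y ∈ weisfeiler g₀ j, ⁅x, y⁆ ∈ weisfeiler g₀ n := by
  induction n with
  | zero =>
    intro i j h x hx y hy
    obtain ⟨rfl, rfl⟩ : i = 0 ∧ j = 0 := by omega
    exact g₀.lie_mem hx hy
  | succ n ih =>
    have key : ∀ i j : ℕ, i + j = n + 1 → ∀ x ∈ weisfeiler g₀ i, ∀ y ∈ weisfeiler g₀ j,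
        ∀ z : L, ⁅x, ⁅y, z⁆⁆ ∈ weisfeiler g₀ n := by
      intro i j h x hx y hy z
      cases j with
      | zero =>
        obtain rfl : i = n + 1 := by omega
        exact hx.2 _
      | succ j => exact ih i j (by omega) x hx _ (hy.2 z)
    intro i j h x hx y hy
    refine ⟨?_, fun z => ?_⟩
    · cases i with
      | zero =>
        obtain rfl : j = n + 1 := by omega
        exact ih 0 n (by omega) x hx y hy.1
      | succ i => exact ih i j (by omega) x hx.1 y hy
    · rw [lie_lie]
      exact (weisfeiler g₀ n).sub_mem (key i j h x hx y hy z) (key j i (by omega) y hy x hx z)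

/-- `⁅𝔤_i, 𝔤_j⁆ ⊆ 𝔤_{i+j}`, and in particular each `𝔤_i` is an ideal of `𝔤₀`. -/
theorem weisfeiler_bracket_le
    {K : Type*} [Field K] [CharZero K]
    {L : Type*} [LieRing L] [LieAlgebra K L] [Module.Finite K L]
    (g₀ : LieSubalgebra K L) :
    (∀ i j : ℕ, ∀ x ∈ weisfeiler g₀ i, ∀ y ∈ weisfeiler g₀ j,
        ⁅x, y⁆ ∈ weisfeiler g₀ (i + j)) ∧
    (∀ i : ℕ, weisfeiler g₀ i ≤ g₀.toSubmodule ∧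
        ∀ x ∈ g₀, ∀ y ∈ weisfeiler g₀ i, ⁅x, y⁆ ∈ weisfeiler g₀ i) := by
  have h1 := fun n => weisfeiler_bracket_aux g₀ n
  refine ⟨fun i j => h1 (i + j) i j rfl, fun i => ⟨?_, fun x hx => h1 i 0 i (by omega) x hx⟩⟩
  induction i with
  | zero => exact le_refl _
  | succ i ih => exact fun x hx => ih hx.1
end

section
/- Let 𝔤 be a finite-dimensional Lie algebra over a field of characteristic zero and 𝔤₀ ⊆ 𝔤 a nonzero Lie subalgebra such that the pair (𝔤,𝔤₀) is effective and 𝔤₀ is a semisimple Lie algebra. Then the order of the pair equals 1; that is, 𝔤₁ = {x ∈ 𝔤₀ : [x,y] ∈ 𝔤₀ for all y ∈ 𝔤} = 0 (while 𝔤₀ ≠ 0). -/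
/-- Every ideal of a semisimple Lie algebra is perfect. -/
theorem ideal_perfect_of_isSemisimple {K M : Type*} [Field K] [LieRing M] [LieAlgebra K M]
    (hss : LieAlgebra.IsSemisimple K M) (I : LieIdeal K M) : ⁅I, I⁆ = I := by
  have hc : ComplementedLattice (LieIdeal K M) :=
    (LieAlgebra.IsSemisimple.booleanGenerators K M).complementedLattice_of_sSup_eq_top
      LieAlgebra.IsSemisimple.sSup_atoms_eq_top
  obtain ⟨C, hC⟩ := hc.exists_isCompl ⁅I, I⁆
  have hle : ⁅I, I⁆ ≤ I := LieSubmodule.lie_le_right I I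
  have hab : IsLieAbelian (I ⊓ C : LieIdeal K M) := by
    rw [LieSubmodule.lie_abelian_iff_lie_self_eq_bot, eq_bot_iff, ← hC.inf_eq_bot]
    exact le_inf (LieSubmodule.mono_lie inf_le_left inf_le_left)
      ((LieSubmodule.lie_le_right _ _).trans inf_le_right)
  have h0 : I ⊓ C = ⊥ :=
    (LieAlgebra.hasTrivialRadical_iff_no_abelian_ideals K M).mp inferInstance _ hab
  refine le_antisymm hle fun x hx => ?_
  have hx' : x ∈ ⁅I, I⁆ ⊔ C := by rw [hC.sup_eq_top]; trivial
  obtain ⟨a, ha, c, hc, rfl⟩ := LieSubmodule.mem_sup _ _ _ |>.mp hx'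
  have hcI : c ∈ I := by
    have := sub_mem hx (hle ha)
    simpa using this
  have : c ∈ I ⊓ C := ⟨hcI, hc⟩
  rw [h0, LieSubmodule.mem_bot] at this
  simpa [this] using ha

/-- If `𝔤₀` is a nonzero semisimple subalgebra and `(𝔤, 𝔤₀)` is effective, then the
order of the pair is `1`, i.e. `𝔤₁ = {x ∈ 𝔤₀ : ⁅x, y⁆ ∈ 𝔤₀ for all y} = 0`. -/
theorem order_eq_one_of_stabilizer_isSemisimple
    {K : Type*} [Field K] [CharZero K]
    {L : Type*} [LieRing L] [LieAlgebra K L] [Module.Finite K L]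
    (g₀ : LieSubalgebra K L) (hg₀ : g₀ ≠ ⊥) (heff : IsEffectivePair g₀)
    (hss : LieAlgebra.IsSemisimple K g₀) :
    weisfeiler g₀ 1 = ⊥ := by
  have hmem : ∀ x : L, x ∈ weisfeiler g₀ 1 ↔ x ∈ g₀ ∧ ∀ y : L, ⁅x, y⁆ ∈ g₀ := fun x => Iff.rfl
  -- `g₁` is stable under `g₀`
  have hstab : ∀ a ∈ g₀, ∀ x ∈ weisfeiler g₀ 1, ⁅a, x⁆ ∈ weisfeiler g₀ 1 := by
    intro a ha x hx
    rw [hmem] at hx ⊢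
    refine ⟨g₀.lie_mem ha hx.1, fun y => ?_⟩
    rw [lie_lie]
    exact sub_mem (g₀.lie_mem ha (hx.2 y)) (hx.2 _)
  let I : LieIdeal K g₀ :=
    { (weisfeiler g₀ 1).comap g₀.toSubmodule.subtype with
      lie_mem := fun {a x} hx => hstab a a.2 x hx }
  have hI : ∀ x : g₀, x ∈ I ↔ (x : L) ∈ weisfeiler g₀ 1 := fun x => Iff.rfl
  have hperf := ideal_perfect_of_isSemisimple hss I
  -- `g₁` is stable under all of `L`, since it is perfect
  have key : ∀ y : L, ∀ x : g₀, x ∈ I → ⁅y, (x : L)⁆ ∈ weisfeiler g₀ 1 := by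
    intro y x hx
    rw [← hperf, ← LieSubmodule.mem_toSubmodule, LieSubmodule.lieIdeal_oper_eq_linear_span'] at hx
    induction hx using Submodule.span_induction with
    | mem z hz =>
      obtain ⟨u, hu, v, hv, rfl⟩ := hz
      rw [hI] at hu hv
      have h1 : ⁅y, (u : L)⁆ ∈ g₀ := by
        rw [← lie_skew]; exact neg_mem (((hmem _).1 hu).2 y)
      have h2 : ⁅y, (v : L)⁆ ∈ g₀ := by
        rw [← lie_skew]; exact neg_mem (((hmem _).1 hv).2 y)
      rw [LieSubalgebra.coe_bracket, leibniz_lie]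
      refine add_mem (hstab _ h1 _ hv) ?_
      rw [← lie_skew]
      exact neg_mem (hstab _ h2 _ hu)
    | zero => simp
    | add a b _ _ ha hb => simpa using add_mem ha hb
    | smul c a _ ha => simpa using Submodule.smul_mem _ c ha
  let J : LieIdeal K L :=
    { weisfeiler g₀ 1 with
      lie_mem := fun {y x} hx => key y ⟨x, ((hmem x).1 hx).1⟩ hx }
  have hJ : J = ⊥ := heff J fun x hx => ((hmem x).1 hx).1
  rw [eq_bot_iff]
  intro x hx
  have : x ∈ J := hx
  rw [hJ] at this
  exact this
end

section
/- Let 𝔤 be a finite-dimensional Lie algebra over a field of characteristic zero and 𝔤₀ ⊆ 𝔤 a Lie subalgebra such that the pair (𝔤,𝔤₀) is effective with order r = o(𝔤,𝔤₀) ≥ 1, and let a ∈ 𝔤_{r−1} with a ≠ 0. Then there exist elements x₁, …, x_{r−1} ∈ 𝔤 with x_i ∉ 𝔤₀ for all i, such that for every 1 ≤ i ≤ r−1 the iterated bracket ad(x_i)∘⋯∘ad(x₁)(a) = [x_i, [x_{i−1}, …, [x₁, a]…]] lies in 𝔤_{r−1−i} but not in 𝔤_{r−i}. -/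
/-- Iterated adjoint action: `iterBracket x a i = ⁅x i, ⁅x (i-1), …, ⁅x 1, a⁆…⁆⁆`,
with `iterBracket x a 0 = a`. -/
def iterBracket {L : Type*} [LieRing L] (x : ℕ → L) (a : L) : ℕ → L
  | 0 => a
  | (i + 1) => ⁅x (i + 1), iterBracket x a i⁆

theorem weisfeiler_lie_g0 {K L : Type*} [Field K] [LieRing L] [LieAlgebra K L]
    (g₀ : LieSubalgebra K L) (k : ℕ) : ∀ b ∈ weisfeiler g₀ k, ∀ y ∈ g₀,
      ⁅b, y⁆ ∈ weisfeiler g₀ k := by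
  induction k with
  | zero => intro b hb y hy; exact g₀.lie_mem hb hy
  | succ k ih =>
    intro b hb y hy
    refine ⟨hb.2 y, fun z => ?_⟩
    have h : ⁅⁅b, y⁆, z⁆ = ⁅b, ⁅y, z⁆⁆ + ⁅⁅b, z⁆, y⁆ := by
      rw [lie_lie, ← lie_skew y ⁅b, z⁆]; abel
    rw [h]
    exact Submodule.add_mem _ (hb.2 _) (ih _ (hb.2 z) y hy)

theorem weisfeiler_exists_step {K L : Type*} [Field K] [LieRing L] [LieAlgebra K L]
    (g₀ : LieSubalgebra K L) (k : ℕ) (b : L) : ∃ y : L,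
      b ∈ weisfeiler g₀ (k + 1) → b ∉ weisfeiler g₀ (k + 2) →
      y ∉ g₀ ∧ ⁅y, b⁆ ∈ weisfeiler g₀ k ∧ ⁅y, b⁆ ∉ weisfeiler g₀ (k + 1) := by
  by_cases h1 : b ∈ weisfeiler g₀ (k + 1)
  · by_cases h2 : b ∈ weisfeiler g₀ (k + 2)
    · exact ⟨0, fun _ h => absurd h2 h⟩
    · have h3 : ∃ y, ⁅b, y⁆ ∉ weisfeiler g₀ (k + 1) := by
        by_contra! h
        exact h2 ⟨h1, h⟩
      obtain ⟨y, hy⟩ := h3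
      refine ⟨y, fun _ _ => ⟨fun h => hy (weisfeiler_lie_g0 g₀ _ b h1 y h), ?_, ?_⟩⟩
      · rw [← lie_skew]; exact Submodule.neg_mem _ (h1.2 y)
      · rw [← lie_skew, Submodule.neg_mem_iff]; exact hy
  · exact ⟨0, fun h => absurd h h1⟩

/-- Let `(𝔤, 𝔤₀)` be effective of order `r ≥ 1` and `0 ≠ a ∈ 𝔤_{r-1}`.  Then there are
`x₁, …, x_{r-1} ∈ 𝔤 ∖ 𝔤₀` such that for `1 ≤ i ≤ r-1` the iterated bracket
`⁅x_i, ⁅x_{i-1}, …, ⁅x₁, a⁆…⁆⁆` lies in `𝔤_{r-1-i}` but not in `𝔤_{r-i}`. -/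
theorem exists_iterated_bracket_chain
    {K : Type*} [Field K] [CharZero K]
    {L : Type*} [LieRing L] [LieAlgebra K L] [Module.Finite K L]
    (g₀ : LieSubalgebra K L) (heff : IsEffectivePair g₀)
    (r : ℕ) (hr : 1 ≤ r)
    (hbot : weisfeiler g₀ r = ⊥) (hmin : ∀ s < r, weisfeiler g₀ s ≠ ⊥)
    (a : L) (ha : a ∈ weisfeiler g₀ (r - 1)) (ha0 : a ≠ 0) :
    ∃ x : ℕ → L,
      (∀ i : ℕ, 1 ≤ i → i ≤ r - 1 → x i ∉ g₀) ∧
      (∀ i : ℕ, 1 ≤ i → i ≤ r - 1 →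
        iterBracket x a i ∈ weisfeiler g₀ (r - 1 - i) ∧
        iterBracket x a i ∉ weisfeiler g₀ (r - i)) := by
  choose f hf using weisfeiler_exists_step g₀
  let B : ℕ → L := fun n => Nat.rec a (fun i b => ⁅f (r - 2 - i) b, b⁆) n
  let x : ℕ → L := fun i => f (r - 1 - i) (B (i - 1))
  have hBs : ∀ i, B (i + 1) = ⁅f (r - 2 - i) (B i), B i⁆ := fun i => rfl
  have hxs : ∀ i, x (i + 1) = f (r - 2 - i) (B i) := fun i => by
    change f (r - 1 - (i + 1)) (B i) = _
    rw [show r - 1 - (i + 1) = r - 2 - i by omega]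
  have hxB : ∀ i, iterBracket x a i = B i := by
    intro i
    induction i with
    | zero => rfl
    | succ i ih => rw [hBs, iterBracket, ih, hxs]
  have key : ∀ i, i ≤ r - 1 →
      B i ∈ weisfeiler g₀ (r - 1 - i) ∧ B i ∉ weisfeiler g₀ (r - i) := by
    intro i
    induction i with
    | zero =>
      intro _
      refine ⟨ha, ?_⟩
      rw [Nat.sub_zero, hbot]
      exact fun h => ha0 ((Submodule.mem_bot K).1 h)
    | succ i ih =>
      intro hi
      obtain ⟨h1, h2⟩ := ih (by omega)
      rw [show r - 1 - i = r - 2 - i + 1 by omega] at h1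
      rw [show r - i = r - 2 - i + 2 by omega] at h2
      rw [show r - 1 - (i + 1) = r - 2 - i by omega,
        show r - (i + 1) = r - 2 - i + 1 by omega, hBs]
      exact (hf _ _ h1 h2).2
  refine ⟨x, fun i h1 hi => ?_, fun i _ hi => ?_⟩
  · obtain ⟨j, rfl⟩ : ∃ j, i = j + 1 := ⟨i - 1, by omega⟩
    obtain ⟨h1, h2⟩ := key j (by omega)
    rw [show r - 1 - j = r - 2 - j + 1 by omega] at h1
    rw [show r - j = r - 2 - j + 2 by omega] at h2
    rw [hxs]
    exact (hf _ _ h1 h2).1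
  · rw [hxB]; exact key i hi
end

section
/- Let 𝔤 be a finite-dimensional Lie algebra over a field of characteristic zero and 𝔤₀ ⊆ 𝔤 a nonzero Lie subalgebra such that the pair (𝔤,𝔤₀) is effective, with order r = o(𝔤,𝔤₀). Then 𝔤₀ ∩ 𝔤_{(r−1)} ≠ 0, where 𝔤_{(r−1)} is the (r−1)-st term of the lower central series of 𝔤; i.e., there exists a nonzero element of 𝔤₀ lying in 𝔤_{(r−1)}. -/
theorem weisfeiler_le_base {K L : Type*} [Field K] [LieRing L] [LieAlgebra K L]
    (g₀ : LieSubalgebra K L) (k : ℕ) : weisfeiler g₀ k ≤ g₀.toSubmodule := by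
  induction k with
  | zero => exact le_rfl
  | succ k ih => exact fun x hx => ih hx.1

/-- If `(𝔤, 𝔤₀)` is effective with `𝔤₀ ≠ 0` and order `r`, then
`𝔤₀ ∩ 𝔤_{(r-1)} ≠ 0` where `𝔤_{(r-1)}` is the `(r-1)`-st term of the lower
central series of `𝔤`. -/
theorem stabilizer_inter_lowerCentralSeries_ne_bot
    {K : Type*} [Field K] [CharZero K]
    {L : Type*} [LieRing L] [LieAlgebra K L] [Module.Finite K L]
    (g₀ : LieSubalgebra K L) (hg₀ : g₀ ≠ ⊥) (heff : IsEffectivePair g₀)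
    (r : ℕ) (hbot : weisfeiler g₀ r = ⊥) (hmin : ∀ s < r, weisfeiler g₀ s ≠ ⊥) :
    ∃ a : L, a ≠ 0 ∧ a ∈ g₀ ∧ a ∈ LieModule.lowerCentralSeries K L L (r - 1) := by
  by_contra hcon
  push Not at hcon
  have hr : r ≠ 0 := by
    rintro rfl
    apply hg₀
    rw [← LieSubalgebra.toSubmodule_inj]
    simpa [weisfeiler] using hbot
  obtain ⟨n, rfl⟩ := Nat.exists_eq_succ_of_ne_zero hr
  simp only [Nat.succ_eq_add_one, Nat.add_sub_cancel] at *
  -- the pieces of the ideal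
  let T : ℕ → Submodule K L := fun k =>
    weisfeiler g₀ k ⊓ (LieModule.lowerCentralSeries K L L (n - k)).toSubmodule
  have hstep : ∀ k x, x ∈ T k → ∀ y : L, ⁅y, x⁆ ∈ ⨆ k, T k := by
    intro k x hx y
    cases k with
    | zero =>
      have hx0 : x = 0 := by
        by_contra h
        exact hcon x h hx.1 hx.2
      rw [hx0, lie_zero]
      exact Submodule.zero_mem _
    | succ k =>
      apply Submodule.mem_iSup_of_mem k
      refine ⟨?_, ?_⟩
      · rw [← lie_skew]
        exact Submodule.neg_mem _ (hx.1.2 y)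
      · by_cases hk : k + 1 ≤ n
        · have e : n - k = (n - (k + 1)) + 1 := by omega
          rw [e, LieModule.lowerCentralSeries_succ]
          exact LieSubmodule.lie_mem_lie (LieSubmodule.mem_top y) hx.2
        · have e : n - k = 0 := by omega
          rw [e, LieModule.lowerCentralSeries_zero]
          exact LieSubmodule.mem_top _
  let I : LieIdeal K L :=
    { (⨆ k, T k : Submodule K L) with
      lie_mem := by
        intro y x hx
        change ⁅y, x⁆ ∈ ⨆ k, T k
        change x ∈ ⨆ k, T k at hx
        induction hx using Submodule.iSup_induction' with
        | mem k x hx => exact hstep k x hx y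
        | zero => rw [lie_zero]; exact Submodule.zero_mem _
        | add a b _ _ ha hb => rw [lie_add]; exact Submodule.add_mem _ ha hb }
  have hI : I = ⊥ := by
    apply heff I
    change (⨆ k, T k) ≤ g₀.toSubmodule
    exact iSup_le fun k => inf_le_left.trans (weisfeiler_le_base g₀ k)
  apply hmin n (Nat.lt_succ_self n)
  rw [eq_bot_iff]
  intro x hx
  have hxI : x ∈ I := by
    change x ∈ ⨆ k, T k
    apply Submodule.mem_iSup_of_mem n
    refine ⟨hx, ?_⟩
    rw [Nat.sub_self, LieModule.lowerCentralSeries_zero]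
    exact LieSubmodule.mem_top _
  rw [hI] at hxI
  simpa using hxI
end

section
/- Let 𝔤 be a finite-dimensional Lie algebra over a field of characteristic zero which is k-step nilpotent, i.e., its lower central series satisfies 𝔤_(k−1) ≠ 0 and 𝔤_(k) = 0, and let 𝔤₀ ⊆ 𝔤 be a Lie subalgebra such that the pair (𝔤,𝔤₀) is effective. Then the order satisfies o(𝔤,𝔤₀) ≤ k + 1. -/
theorem weisfeiler_stab {K L : Type*} [Field K] [LieRing L] [LieAlgebra K L]
    (g₀ : LieSubalgebra K L) (k : ℕ) (hk' : LieModule.lowerCentralSeries K L L k = ⊥) :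
    ∀ (j m : ℕ), k ≤ j + m → ∀ x : L, x ∈ LieModule.lowerCentralSeries K L L m →
      x ∈ weisfeiler g₀ j → x ∈ weisfeiler g₀ (j + 1) := by
  intro j
  induction j with
  | zero =>
    intro m hm x hx _
    have h1 := LieModule.antitone_lowerCentralSeries K L L (show k ≤ m by omega) hx
    rw [hk', LieSubmodule.mem_bot] at h1
    rw [h1]
    exact Submodule.zero_mem _
  | succ j ih =>
    intro m hm x hx hw
    refine ⟨hw, fun y => ?_⟩
    refine ih (m + 1) (by omega) _ ?_ (hw.2 y)
    rw [LieModule.lowerCentralSeries_succ, ← lie_skew]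
    exact neg_mem (LieSubmodule.lie_mem_lie (LieSubmodule.mem_top y) hx)

theorem weisfeiler_le {K L : Type*} [Field K] [LieRing L] [LieAlgebra K L]
    (g₀ : LieSubalgebra K L) (j : ℕ) : weisfeiler g₀ j ≤ g₀.toSubmodule := by
  induction j with
  | zero => exact le_rfl
  | succ j ih => exact fun x hx => ih hx.1

/-- If `𝔤` is `k`-step nilpotent and `(𝔤, 𝔤₀)` is effective, then the order of
the pair satisfies `o(𝔤, 𝔤₀) ≤ k + 1`. -/
theorem order_le_of_nilpotent
    {K : Type*} [Field K] [CharZero K]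
    {L : Type*} [LieRing L] [LieAlgebra K L] [Module.Finite K L]
    (g₀ : LieSubalgebra K L) (heff : IsEffectivePair g₀)
    (k : ℕ) (hk : LieModule.lowerCentralSeries K L L (k - 1) ≠ ⊥)
    (hk' : LieModule.lowerCentralSeries K L L k = ⊥)
    (r : ℕ) (hbot : weisfeiler g₀ r = ⊥) (hmin : ∀ s < r, weisfeiler g₀ s ≠ ⊥) :
    r ≤ k + 1 := by
  by_contra hr
  refine hmin k (by omega) ?_
  let I : LieIdeal K L :=
    { weisfeiler g₀ k with
      lie_mem := by
        intro y x hx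
        have h := weisfeiler_stab g₀ k hk' k 0 (by omega) x (by simp) hx
        have h2 := h.2 y
        rw [← lie_skew]
        exact (weisfeiler g₀ k).neg_mem h2 }
  have hI : I = ⊥ := heff I (weisfeiler_le g₀ k)
  rw [eq_bot_iff]
  intro x hx
  have hxI : x ∈ I := hx
  rw [hI] at hxI
  simpa using hxI
end

section
/- Let 𝔤 be a finite-dimensional Lie algebra over a field of characteristic zero and let 𝔨 ⊆ 𝔥 ⊆ 𝔤 be Lie subalgebras such that 𝔥 is an ideal of 𝔤 and 𝔨 is an ideal of 𝔥. Let (𝔨_i) denote the Weisfeiler filtration of the pair (𝔤, 𝔨) (so 𝔨₀ = 𝔨) and let 𝔨^(i) denote the i-th term of the derived series of 𝔨. Then 𝔨^(i) ⊆ 𝔨_i for every i ≥ 0. -/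
/-- The derived series of a subalgebra `k`, as submodules of the ambient Lie algebra:
`D 0 = k` and `D (i+1) = span ⁅D i, D i⁆`. -/
def derivedSeriesIn {K L : Type*} [Field K] [LieRing L] [LieAlgebra K L]
    (k : LieSubalgebra K L) : ℕ → Submodule K L
  | 0 => k.toSubmodule
  | (i + 1) => Submodule.span K
      {z | ∃ x ∈ derivedSeriesIn k i, ∃ y ∈ derivedSeriesIn k i, z = ⁅x, y⁆}

/-- If `𝔨 ⊆ 𝔥 ⊆ 𝔤` with `𝔥` an ideal of `𝔤` and `𝔨` an ideal of `𝔥`, then the derived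
series of `𝔨` is contained termwise in the Weisfeiler filtration of the pair `(𝔤, 𝔨)`. -/
theorem derivedSeries_le_weisfeiler
    {K : Type*} [Field K] [CharZero K]
    {L : Type*} [LieRing L] [LieAlgebra K L] [Module.Finite K L]
    (k h : LieSubalgebra K L) (hkh : k ≤ h)
    (hideal_hg : ∀ x : L, ∀ y ∈ h, ⁅x, y⁆ ∈ h)
    (hideal_kh : ∀ x ∈ h, ∀ y ∈ k, ⁅x, y⁆ ∈ k) :
    ∀ i : ℕ, derivedSeriesIn k i ≤ weisfeiler k i := by
  have hWk : ∀ i : ℕ, weisfeiler k i ≤ k.toSubmodule := by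
    intro i
    induction i with
    | zero => exact le_refl _
    | succ n ih => exact fun x hx => ih hx.1
  -- every term of the filtration is stable under bracketing with `h`
  have hWh : ∀ i : ℕ, ∀ x ∈ h, ∀ y ∈ weisfeiler k i, ⁅x, y⁆ ∈ weisfeiler k i := by
    intro i
    induction i with
    | zero => exact hideal_kh
    | succ n ih =>
      intro x hx y hy
      refine ⟨ih x hx y hy.1, fun z => ?_⟩
      rw [lie_lie]
      exact Submodule.sub_mem _ (ih x hx _ (hy.2 z)) (hy.2 _)
  intro i
  induction i with
  | zero => exact le_refl _
  | succ n ih =>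
    refine Submodule.span_le.2 ?_
    rintro _ ⟨x, hx, y, hy, rfl⟩
    have hx' := ih hx
    have hy' := ih hy
    have hxh : x ∈ h := hkh (hWk n hx')
    have hyh : y ∈ h := hkh (hWk n hy')
    have key : ∀ a ∈ h, ∀ b ∈ weisfeiler k n, ∀ z : L, ⁅b, ⁅a, z⁆⁆ ∈ weisfeiler k n := by
      intro a ha b hb z
      have haz : ⁅a, z⁆ ∈ h := by
        rw [← lie_skew]
        exact h.neg_mem (hideal_hg z a ha)
      rw [← lie_skew]
      exact Submodule.neg_mem _ (hWh n _ haz b hb)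
    refine ⟨hWh n x hxh y hy', fun z => ?_⟩
    rw [lie_lie]
    exact Submodule.sub_mem _ (key y hyh x hx' z) (key x hxh y hy' z)
end
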